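/- (Generalized Haynsworth formula.) Let M be a Hermitian matrix in block form M = [[A, B], [B*, C]], where A is N×N Hermitian, C is d×d Hermitian, and B is N×d. Let P be the orthogonal projection onto Null(A), let 𝒬 = Null(B*PB) ⊆ ℂ^d, and set i_∞ = rank(B*PB) = d − dim 𝒬. Let M/A := C − B*A⁺B be the generalized Schur complement, where ⁺ denotes the Moore–Penrose pseudoinverse, and let In_𝒬(M/A) denote the inertia of the restriction of M/A to 𝒬 (i.e. of Q(M/A)Q* viewed as an operator on 𝒬, with Q the orthogonal projection onto 𝒬). Then In(M) = In(A) + In_𝒬(M/A) + (i_∞, i_∞, −i_∞). -/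

import Mathlib

noncomputable section

open Matrix Complex
open scoped ComplexOrder

/-- Eigenvalues of a square complex matrix, sorted in increasing order
(junk value `0` if the matrix is not Hermitian). -/
noncomputable def sortedEigs {n : ℕ} (A : Matrix (Fin n) (Fin n) ℂ) : Fin n → ℝ :=
  if hA : A.IsHermitian then hA.eigenvalues ∘ Tuple.sort hA.eigenvalues else 0

/-- The Moore–Penrose pseudoinverse of a Hermitian matrix (junk value `0` otherwise). -/
noncomputable def pinvH {m : Type*} [Fintype m] [DecidableEq m] (A : Matrix m m ℂ) :
    Matrix m m ℂ :=
  if hA : A.IsHermitian then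
    (hA.eigenvectorUnitary : Matrix m m ℂ) *
      Matrix.diagonal (fun i => if hA.eigenvalues i = 0 then 0 else ((hA.eigenvalues i : ℂ))⁻¹) *
      star (hA.eigenvectorUnitary : Matrix m m ℂ)
  else 0

/-- The orthogonal projection onto the null space of a Hermitian matrix. -/
noncomputable def nullProj {m : Type*} [Fintype m] [DecidableEq m] (A : Matrix m m ℂ) :
    Matrix m m ℂ :=
  1 - pinvH A * A

/-- The number of positive eigenvalues (with multiplicity) of a Hermitian matrix. -/
noncomputable def iPos {m : Type*} [Fintype m] [DecidableEq m] (A : Matrix m m ℂ) : ℕ :=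
  if hA : A.IsHermitian then Nat.card {i // 0 < hA.eigenvalues i} else 0

/-- The number of negative eigenvalues (with multiplicity) of a Hermitian matrix. -/
noncomputable def iNeg {m : Type*} [Fintype m] [DecidableEq m] (A : Matrix m m ℂ) : ℕ :=
  if hA : A.IsHermitian then Nat.card {i // hA.eigenvalues i < 0} else 0

/-- The number of zero eigenvalues (with multiplicity) of a Hermitian matrix. -/
noncomputable def iZero {m : Type*} [Fintype m] [DecidableEq m] (A : Matrix m m ℂ) : ℕ :=
  if hA : A.IsHermitian then Nat.card {i // hA.eigenvalues i = 0} else 0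

/-!
Write `K = P B`, `S = M/A` and let `Q` be the orthogonal projection onto `Null(K* K) = 𝒬`. Two
shears `[[1, X], [0, 1]]` act on `M` by congruence: the first, with `X = -A⁺ B`, replaces `B` by
`K` and `C` by `S`; the second uses the pivot `K` to cut `S` down to `Q S Q`. Since `A K = 0` and
`K Q = 0`, the result is the sum of the mutually annihilating matrices `[[A, 0], [0, Q S Q]]` and
`[[0, K], [K*, 0]]`. The latter is congruent to its own negative, so it contributes
`rank K = i_∞` to both signs.

The number of positive eigenvalues does not increase under `M ↦ T* M T` for rectangular `T`: it is
the rank of the positive part of `M`, which dominates `M`, and rank is monotone on positive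
semidefinite matrices. This one inequality gives Sylvester's law, additivity over annihilating
summands, and the fact that the inertia of `V* S V` depends only on the range of `V`. Negative
eigenvalues are handled by passing to `-M`, and zero eigenvalues by counting dimensions.
-/

section PositivePart

open scoped MatrixOrder

variable {n k : Type*} [Fintype n]

theorem rank_le_rank_of_nonneg_of_le {X Y : Matrix n n ℂ} (hX : 0 ≤ X) (hXY : X ≤ Y) :
    X.rank ≤ Y.rank := by
  have hY : 0 ≤ Y := hX.trans hXY
  have hker : LinearMap.ker Y.mulVecLin ≤ LinearMap.ker X.mulVecLin := fun v hv => by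
    have hYv : star v ⬝ᵥ Y *ᵥ v = 0 := (hY.posSemidef.dotProduct_mulVec_zero_iff v).2 hv
    refine (hX.posSemidef.dotProduct_mulVec_zero_iff v).1 (le_antisymm ?_ ?_)
    · have hdiff := hXY.dotProduct_mulVec_nonneg v
      rwa [sub_mulVec, dotProduct_sub, hYv, zero_sub, neg_nonneg] at hdiff
    · exact hX.posSemidef.dotProduct_mulVec_nonneg v
  have hrankX := X.mulVecLin.finrank_range_add_finrank_ker
  have hrankY := Y.mulVecLin.finrank_range_add_finrank_ker
  have hfinrank := Submodule.finrank_mono hker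
  simp only [Matrix.rank]
  lia

variable [DecidableEq n] [Fintype k] [DecidableEq k]

theorem continuousOn_real_spectrum (M : Matrix n n ℂ) (f : ℝ → ℝ) :
    ContinuousOn f (spectrum ℝ M) :=
  finite_real_spectrum.continuousOn f

theorem rank_cfc {M : Matrix n n ℂ} (hM : M.IsHermitian) (f : ℝ → ℝ) :
    (cfc f M).rank = Nat.card {i // f (hM.eigenvalues i) ≠ 0} := by
  rw [hM.cfc_eq, IsHermitian.cfc, Unitary.conjStarAlgAut_apply, ← Unitary.coe_star,
    rank_mul_eq_left_of_isUnit_det _ _ (UnitaryGroup.det_isUnit _),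
    rank_mul_eq_right_of_isUnit_det _ _ (UnitaryGroup.det_isUnit _), rank_diagonal,
    Nat.card_eq_fintype_card]
  simp

theorem iPos_eq_rank_posPart (M : Matrix n n ℂ) : iPos M = M⁺.rank := by
  by_cases hM : M.IsHermitian
  · rw [iPos, dif_pos hM, CFC.posPart_def, cfcₙ_eq_cfc (hf0 := posPart_zero), rank_cfc hM]
    simp [posPart_eq_zero]
  · rw [iPos, dif_neg hM, CFC.posPart_eq_zero_of_not_isSelfAdjoint hM, rank_zero]

theorem iPos_eq_rank_of_posSemidef {M : Matrix n n ℂ} (hM : M.PosSemidef) : iPos M = M.rank := by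
  rw [iPos_eq_rank_posPart, (CFC.posPart_eq_self M).2 hM.nonneg]

theorem iNeg_eq_rank_negPart (M : Matrix n n ℂ) : iNeg M = M⁻.rank := by
  by_cases hM : M.IsHermitian
  · rw [iNeg, dif_pos hM, CFC.negPart_def, cfcₙ_eq_cfc (hf0 := negPart_zero), rank_cfc hM]
    simp [negPart_eq_zero]
  · rw [iNeg, dif_neg hM, CFC.negPart_eq_zero_of_not_isSelfAdjoint hM, rank_zero]

theorem iPos_neg (M : Matrix n n ℂ) : iPos (-M) = iNeg M := by
  rw [iPos_eq_rank_posPart, iNeg_eq_rank_negPart, CFC.posPart_neg]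

theorem exists_posPart_eq_conjTranspose_mul_mul {M : Matrix n n ℂ} (hM : M.IsHermitian) :
    ∃ R : Matrix n n ℂ, M⁺ = Rᴴ * M * R := by
  have hsa : IsSelfAdjoint M := hM
  let χ : ℝ → ℝ := fun x => if 0 < x then 1 else 0
  refine ⟨cfc χ M, ?_⟩
  have hcfc : (cfc χ M)ᴴ * cfc (id : ℝ → ℝ) M * cfc χ M = cfc (fun x => χ x * id x * χ x) M := by
    have hχ : (cfc χ M)ᴴ = cfc χ M := (IsSelfAdjoint.cfc (f := χ) (a := M)).isHermitian.eq
    rw [hχ, cfc_mul _ _ M (continuousOn_real_spectrum M _) (continuousOn_real_spectrum M _),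
      cfc_mul _ _ M (continuousOn_real_spectrum M _) (continuousOn_real_spectrum M _)]
  rw [cfc_id ℝ M] at hcfc
  rw [hcfc, CFC.posPart_def, cfcₙ_eq_cfc (hf0 := posPart_zero)]
  refine cfc_congr fun x _ => ?_
  by_cases hx : 0 < x
  · simp [χ, hx, hx.le]
  · simp [χ, hx, not_lt.1 hx]

theorem iPos_conjTranspose_mul_mul_le {M : Matrix n n ℂ} (hM : M.IsHermitian)
    (T : Matrix n k ℂ) : iPos (Tᴴ * M * T) ≤ iPos M := by
  obtain ⟨R, hR⟩ :=
    exists_posPart_eq_conjTranspose_mul_mul (isHermitian_conjTranspose_mul_mul T hM)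
  have hR' : (Tᴴ * M * T)⁺ = (T * R)ᴴ * M * (T * R) := by
    rw [hR, conjTranspose_mul]
    simp only [Matrix.mul_assoc]
  have hle : (T * R)ᴴ * M * (T * R) ≤ (T * R)ᴴ * M⁺ * (T * R) := by
    have hsub := (le_iff.1 (CFC.le_posPart hM)).conjTranspose_mul_mul_same (T * R)
    rwa [Matrix.mul_sub, Matrix.sub_mul] at hsub
  rw [iPos_eq_rank_posPart, iPos_eq_rank_posPart]
  calc ((Tᴴ * M * T)⁺).rank
      ≤ ((T * R)ᴴ * M⁺ * (T * R)).rank :=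
        rank_le_rank_of_nonneg_of_le (CFC.posPart_nonneg _) (hR'.trans_le hle)
    _ ≤ ((T * R)ᴴ * M⁺).rank := rank_mul_le_left _ _
    _ ≤ M⁺.rank := rank_mul_le_right _ _

theorem iPos_eq_countP_roots_charpoly {M : Matrix n n ℂ} (hM : M.IsHermitian) :
    iPos M = M.charpoly.roots.countP (0 < ·.re) := by
  rw [hM.roots_charpoly_eq_eigenvalues, Multiset.countP_map, iPos, dif_pos hM,
    Nat.card_eq_fintype_card, Fintype.card_subtype]
  simp [Finset.card_def]

end PositivePart

section Range

variable {n k l : Type*} [Fintype k] [Fintype l]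

theorem exists_eq_mul_of_range_mulVecLin_le {V : Matrix n k ℂ} {W : Matrix n l ℂ}
    (h : LinearMap.range V.mulVecLin ≤ LinearMap.range W.mulVecLin) :
    ∃ T : Matrix l k ℂ, V = W * T := by
  classical
  choose t ht using fun j : k => h ⟨Pi.single j 1, rfl⟩
  refine ⟨of fun i j => t j i, ext_col fun j => ?_⟩
  have hcol : W *ᵥ t j = V.col j := by simpa using ht j
  exact hcol.symm

theorem rank_add_card_of_range_eq_ker {H : Matrix n k ℂ} {V : Matrix k l ℂ}
    (hV : Function.Injective V.mulVec)
    (hVH : LinearMap.range V.mulVecLin = LinearMap.ker H.mulVecLin) :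
    H.rank + Fintype.card l = Fintype.card k := by
  have hrank := H.mulVecLin.finrank_range_add_finrank_ker
  rwa [← hVH, LinearMap.finrank_range_of_inj (f := V.mulVecLin) hV, Module.finrank_pi,
    Module.finrank_pi] at hrank

variable [Fintype n] [DecidableEq k] [DecidableEq l]

theorem iPos_conjTranspose_mul_mul_le_of_range_le {S : Matrix n n ℂ} (hS : S.IsHermitian)
    {V : Matrix n k ℂ} {W : Matrix n l ℂ}
    (h : LinearMap.range V.mulVecLin ≤ LinearMap.range W.mulVecLin) :
    iPos (Vᴴ * S * V) ≤ iPos (Wᴴ * S * W) := by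
  obtain ⟨T, rfl⟩ := exists_eq_mul_of_range_mulVecLin_le h
  have hT : (W * T)ᴴ * S * (W * T) = Tᴴ * (Wᴴ * S * W) * T := by
    simp only [conjTranspose_mul, Matrix.mul_assoc]
  exact hT ▸ iPos_conjTranspose_mul_mul_le (isHermitian_conjTranspose_mul_mul W hS) T

theorem iPos_conjTranspose_mul_mul_eq_of_range_eq {S : Matrix n n ℂ} (hS : S.IsHermitian)
    {V : Matrix n k ℂ} {W : Matrix n l ℂ}
    (h : LinearMap.range V.mulVecLin = LinearMap.range W.mulVecLin) :
    iPos (Vᴴ * S * V) = iPos (Wᴴ * S * W) :=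
  le_antisymm (iPos_conjTranspose_mul_mul_le_of_range_le hS h.le)
    (iPos_conjTranspose_mul_mul_le_of_range_le hS h.ge)

end Range

section Inertia

variable {n e : Type*} [Fintype n] [DecidableEq n] [Fintype e] [DecidableEq e]

theorem iPos_add_iNeg {M : Matrix n n ℂ} (hM : M.IsHermitian) : iPos M + iNeg M = M.rank := by
  have hdisj : Disjoint (fun i => hM.eigenvalues i < 0) (fun i => 0 < hM.eigenvalues i) :=
    Pi.disjoint_iff.2 fun i => Prop.disjoint_iff.2 fun h => h.1.asymm h.2
  simp only [iPos, iNeg, dif_pos hM, hM.rank_eq_card_non_zero_eigs, Nat.card_eq_fintype_card,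
    ne_iff_lt_or_gt, Fintype.card_subtype_or_disjoint _ _ hdisj, add_comm]

theorem rank_add_iZero {M : Matrix n n ℂ} (hM : M.IsHermitian) :
    M.rank + iZero M = Fintype.card n := by
  rw [hM.rank_eq_card_non_zero_eigs, iZero, dif_pos hM, ← Nat.card_eq_fintype_card, add_comm,
    ← Nat.card_sum, Nat.card_congr (Equiv.sumCompl _), Nat.card_eq_fintype_card]

theorem iPos_conjTranspose_mul_mul_of_isUnit {M : Matrix n n ℂ} (hM : M.IsHermitian)
    {Z : Matrix n n ℂ} (hZ : IsUnit Z) : iPos (Zᴴ * M * Z) = iPos M := by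
  have hrange : LinearMap.range Z.mulVecLin = LinearMap.range (1 : Matrix n n ℂ).mulVecLin := by
    rw [mulVecLin_one, LinearMap.range_id, LinearMap.range_eq_top]
    exact mulVec_surjective_iff_isUnit.2 hZ
  simpa using iPos_conjTranspose_mul_mul_eq_of_range_eq hM hrange

theorem iPos_fromBlocks_zero {X : Matrix n n ℂ} (hX : X.IsHermitian)
    {Y : Matrix e e ℂ} (hY : Y.IsHermitian) :
    iPos (fromBlocks X 0 0 Y) = iPos X + iPos Y := by
  have hXY : (fromBlocks X 0 0 Y).IsHermitian := hX.fromBlocks conjTranspose_zero hY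
  rw [iPos_eq_countP_roots_charpoly hXY, iPos_eq_countP_roots_charpoly hX,
    iPos_eq_countP_roots_charpoly hY, charpoly_fromBlocks_zero₁₂,
    Polynomial.roots_mul (mul_ne_zero X.charpoly_monic.ne_zero Y.charpoly_monic.ne_zero),
    Multiset.countP_add]

theorem iPos_add_le {X Y : Matrix n n ℂ} (hX : X.IsHermitian) (hY : Y.IsHermitian) :
    iPos (X + Y) ≤ iPos X + iPos Y := by
  let T : Matrix (n ⊕ n) n ℂ := fromRows 1 1
  have hT : Tᴴ * fromBlocks X 0 0 Y * T = X + Y := by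
    simp [T, Matrix.mul_assoc, conjTranspose_fromRows_eq_fromCols_conjTranspose,
      fromBlocks_mul_fromRows, fromCols_mul_fromRows]
  rw [← iPos_fromBlocks_zero hX hY, ← hT]
  exact iPos_conjTranspose_mul_mul_le (hX.fromBlocks conjTranspose_zero hY) T

theorem iPos_fromBlocks_offDiagonal (K : Matrix n e ℂ) :
    iPos (fromBlocks 0 K Kᴴ 0) = K.rank := by
  set X := fromBlocks 0 K Kᴴ 0 with hXdef
  have hX : X.IsHermitian := isHermitian_zero.fromBlocks rfl isHermitian_zero
  have hrank : X.rank = K.rank + K.rank := by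
    have hsq : Xᴴ * X = fromBlocks (K * Kᴴ) 0 0 (Kᴴ * K) := by
      rw [hX.eq, hXdef, fromBlocks_multiply]; simp
    rw [← rank_conjTranspose_mul_self X,
      ← iPos_eq_rank_of_posSemidef (posSemidef_conjTranspose_mul_self X), hsq,
      iPos_fromBlocks_zero (isHermitian_mul_conjTranspose_self K)
        (isHermitian_conjTranspose_mul_self K),
      iPos_eq_rank_of_posSemidef (posSemidef_self_mul_conjTranspose K),
      iPos_eq_rank_of_posSemidef (posSemidef_conjTranspose_mul_self K),
      rank_self_mul_conjTranspose, rank_conjTranspose_mul_self]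
  let J : Matrix (n ⊕ e) (n ⊕ e) ℂ := fromBlocks 1 0 0 (-1)
  have hJ : IsUnit J := IsUnit.of_mul_eq_one J (by simp [J, fromBlocks_multiply])
  have hneg : iNeg X = iPos X := by
    have hJX : Jᴴ * X * J = -X := by
      simp [J, hXdef, fromBlocks_multiply, fromBlocks_conjTranspose, fromBlocks_neg]
    rw [← iPos_neg, ← hJX, iPos_conjTranspose_mul_mul_of_isUnit hX hJ]
  have hsum := iPos_add_iNeg hX
  lia

end Inertia

section Pseudoinverse

variable {n e : Type*} [Fintype n] [DecidableEq n] {A : Matrix n n ℂ}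

theorem pinvH_eq_cfc_inv (hA : A.IsHermitian) : pinvH A = cfc (·⁻¹ : ℝ → ℝ) A := by
  rw [pinvH, dif_pos hA, hA.cfc_eq, IsHermitian.cfc, Unitary.conjStarAlgAut_apply]
  congr 3
  funext i
  by_cases hi : hA.eigenvalues i = 0 <;> simp [hi]

theorem isHermitian_pinvH (hA : A.IsHermitian) : (pinvH A).IsHermitian := by
  rw [pinvH_eq_cfc_inv hA]
  exact IsSelfAdjoint.cfc.isHermitian

theorem pinvH_neg (hA : A.IsHermitian) : pinvH (-A) = -pinvH A := by
  have hsa : IsSelfAdjoint A := hA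
  rw [pinvH_eq_cfc_inv hA.neg, pinvH_eq_cfc_inv hA, ← cfc_neg,
    ← cfc_comp_neg (·⁻¹ : ℝ → ℝ) A ((finite_real_spectrum.image _).continuousOn _)]
  simp only [inv_neg]

theorem mul_pinvH_eq_cfc (hA : A.IsHermitian) : A * pinvH A = cfc (fun x : ℝ => x * x⁻¹) A := by
  have hsa : IsSelfAdjoint A := hA
  rw [cfc_mul _ _ A (continuousOn_real_spectrum A _) (continuousOn_real_spectrum A _),
    cfc_id' ℝ A, pinvH_eq_cfc_inv hA]

theorem mul_pinvH_comm (hA : A.IsHermitian) : A * pinvH A = pinvH A * A := by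
  have hsa : IsSelfAdjoint A := hA
  rw [pinvH_eq_cfc_inv hA]
  simpa only [cfc_id ℝ A] using (cfc_commute_cfc id (·⁻¹ : ℝ → ℝ) A).eq

theorem mul_pinvH_mul_self (hA : A.IsHermitian) : A * pinvH A * A = A := by
  have hsa : IsSelfAdjoint A := hA
  calc A * pinvH A * A
      = cfc (fun x : ℝ => x * x⁻¹ * x) A := by
        rw [cfc_mul _ _ A (continuousOn_real_spectrum A _) (continuousOn_real_spectrum A _),
          cfc_id' ℝ A, mul_pinvH_eq_cfc hA]
    _ = A := by simp only [mul_inv_mul_cancel, cfc_id' ℝ A]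

theorem pinvH_mul_mul_pinvH (hA : A.IsHermitian) : pinvH A * A * pinvH A = pinvH A := by
  calc pinvH A * A * pinvH A
      = cfc (fun x : ℝ => x * x⁻¹ * x⁻¹) A := by
        rw [cfc_mul _ _ A (continuousOn_real_spectrum A _) (continuousOn_real_spectrum A _),
          ← mul_pinvH_eq_cfc hA, ← pinvH_eq_cfc_inv hA, mul_pinvH_comm hA]
    _ = pinvH A := by
        rw [pinvH_eq_cfc_inv hA]
        exact cfc_congr fun x _ => by simpa only [inv_inv] using inv_mul_mul_self x⁻¹

theorem nullProj_neg (hA : A.IsHermitian) : nullProj (-A) = nullProj A := by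
  rw [nullProj, nullProj, pinvH_neg hA, neg_mul_neg]

theorem isHermitian_nullProj (hA : A.IsHermitian) : (nullProj A).IsHermitian := by
  rw [IsHermitian, nullProj, conjTranspose_sub, conjTranspose_one, conjTranspose_mul,
    (isHermitian_pinvH hA).eq, hA.eq, mul_pinvH_comm hA]

theorem mul_nullProj (hA : A.IsHermitian) : A * nullProj A = 0 := by
  rw [nullProj, Matrix.mul_sub, Matrix.mul_one, ← Matrix.mul_assoc, mul_pinvH_mul_self hA, sub_self]

theorem nullProj_mul_nullProj (hA : A.IsHermitian) : nullProj A * nullProj A = nullProj A := by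
  nth_rw 1 [nullProj]
  rw [Matrix.sub_mul, Matrix.one_mul, Matrix.mul_assoc, mul_nullProj hA, Matrix.mul_zero, sub_zero]

theorem range_nullProj (hA : A.IsHermitian) :
    LinearMap.range (nullProj A).mulVecLin = LinearMap.ker A.mulVecLin := by
  refine le_antisymm ?_ fun v hv => ⟨v, ?_⟩
  · rw [LinearMap.range_le_ker_iff, ← mulVecLin_mul, mul_nullProj hA, mulVecLin_zero]
  · have hAv : A *ᵥ v = 0 := hv
    simp [nullProj, hAv]

theorem conjTranspose_nullProj_mul_mul_nullProj_mul (hA : A.IsHermitian)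
    (B : Matrix n e ℂ) : (nullProj A * B)ᴴ * (nullProj A * B) = Bᴴ * nullProj A * B := by
  rw [conjTranspose_mul, (isHermitian_nullProj hA).eq, Matrix.mul_assoc, ← Matrix.mul_assoc _ _ B,
    nullProj_mul_nullProj hA, Matrix.mul_assoc]

theorem isHermitian_schurComplement (hA : A.IsHermitian) {C : Matrix e e ℂ}
    (hC : C.IsHermitian) (B : Matrix n e ℂ) : (C - Bᴴ * pinvH A * B).IsHermitian :=
  hC.sub (isHermitian_conjTranspose_mul_mul B (isHermitian_pinvH hA))

end Pseudoinverse

section BlockInertia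

variable {n e : Type*} [Fintype n] [DecidableEq n] [Fintype e] [DecidableEq e]

theorem iPos_add_of_mul_eq_zero {X Y : Matrix n n ℂ} (hX : X.IsHermitian) (hY : Y.IsHermitian)
    (hXY : X * Y = 0) : iPos (X + Y) = iPos X + iPos Y := by
  refine le_antisymm (iPos_add_le hX hY) ?_
  have hYX : Y * X = 0 := by simpa [hX.eq, hY.eq] using congrArg conjTranspose hXY
  let T : Matrix n (n ⊕ n) ℂ := fromCols (X * pinvH X) (Y * pinvH Y)
  have hmulT : (X + Y) * T = fromCols X Y := by
    have hXXX : X * (X * pinvH X) = X := by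
      rw [mul_pinvH_comm hX, ← Matrix.mul_assoc, mul_pinvH_mul_self hX]
    have hYYY : Y * (Y * pinvH Y) = Y := by
      rw [mul_pinvH_comm hY, ← Matrix.mul_assoc, mul_pinvH_mul_self hY]
    rw [mul_fromCols, Matrix.add_mul, Matrix.add_mul, hXXX, hYYY, ← Matrix.mul_assoc Y X,
      ← Matrix.mul_assoc X Y, hXY, hYX, Matrix.zero_mul, Matrix.zero_mul, add_zero, zero_add]
  have hT : Tᴴ * (X + Y) * T = fromBlocks X 0 0 Y := by
    rw [Matrix.mul_assoc, hmulT, conjTranspose_fromCols_eq_fromRows_conjTranspose,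
      fromRows_mul_fromCols]
    simp only [conjTranspose_mul, hX.eq, hY.eq, (isHermitian_pinvH hX).eq,
      (isHermitian_pinvH hY).eq, Matrix.mul_assoc, hXY, hYX, Matrix.mul_zero]
    simp only [← Matrix.mul_assoc, ← mul_pinvH_comm hX, ← mul_pinvH_comm hY,
      mul_pinvH_mul_self hX, mul_pinvH_mul_self hY]
  rw [← iPos_fromBlocks_zero hX hY, ← hT]
  exact iPos_conjTranspose_mul_mul_le (hX.add hY) T

theorem iPos_fromBlocks_shear {A : Matrix n n ℂ} (hA : A.IsHermitian) {C : Matrix e e ℂ}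
    (hC : C.IsHermitian) (B X : Matrix n e ℂ) :
    iPos (fromBlocks A (B + A * X) (B + A * X)ᴴ (C + Bᴴ * X + Xᴴ * (B + A * X))) =
      iPos (fromBlocks A B Bᴴ C) := by
  let Z : Matrix (n ⊕ e) (n ⊕ e) ℂ := fromBlocks 1 X 0 1
  have hZ : IsUnit Z := (isUnit_iff_isUnit_det Z).2 (by simp [Z])
  have hcongr : Zᴴ * fromBlocks A B Bᴴ C * Z =
      fromBlocks A (B + A * X) (B + A * X)ᴴ (C + Bᴴ * X + Xᴴ * (B + A * X)) := by
    rw [Matrix.mul_assoc]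
    simp only [Z, fromBlocks_conjTranspose, fromBlocks_multiply, conjTranspose_one,
      conjTranspose_zero, conjTranspose_add, conjTranspose_mul, hA.eq, Matrix.one_mul,
      Matrix.mul_one, Matrix.zero_mul, Matrix.mul_zero, add_zero]
    simp only [add_comm]
  rw [← hcongr, iPos_conjTranspose_mul_mul_of_isUnit (hA.fromBlocks rfl hC) hZ]

theorem iPos_fromBlocks_eq_iPos_fromBlocks_schurComplement {A : Matrix n n ℂ} (hA : A.IsHermitian)
    {C : Matrix e e ℂ} (hC : C.IsHermitian) (B : Matrix n e ℂ) :
    iPos (fromBlocks A B Bᴴ C) =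
      iPos (fromBlocks A (nullProj A * B) (nullProj A * B)ᴴ (C - Bᴴ * pinvH A * B)) := by
  have hPB : B + A * -(pinvH A * B) = nullProj A * B := by
    rw [nullProj, ← mul_pinvH_comm hA, Matrix.sub_mul, Matrix.one_mul, Matrix.mul_neg,
      Matrix.mul_assoc, sub_eq_add_neg]
  have hpinvP : pinvH A * nullProj A = 0 := by
    rw [nullProj, Matrix.mul_sub, Matrix.mul_one, ← mul_pinvH_comm hA, ← Matrix.mul_assoc,
      pinvH_mul_mul_pinvH hA, sub_self]
  rw [← iPos_fromBlocks_shear hA hC B (-(pinvH A * B)), hPB]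
  congr 2
  rw [conjTranspose_neg, conjTranspose_mul, (isHermitian_pinvH hA).eq, Matrix.neg_mul,
    Matrix.mul_assoc Bᴴ, ← Matrix.mul_assoc (pinvH A), hpinvP]
  simp [Matrix.mul_assoc, sub_eq_add_neg]

theorem iPos_fromBlocks_eq_iPos_fromBlocks_compression {A : Matrix n n ℂ} (hA : A.IsHermitian)
    {S : Matrix e e ℂ} (hS : S.IsHermitian) {K : Matrix n e ℂ} (hAK : A * K = 0) :
    iPos (fromBlocks A K Kᴴ S) =
      iPos (fromBlocks A K Kᴴ (nullProj (Kᴴ * K) * S * nullProj (Kᴴ * K))) := by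
  have hH : (Kᴴ * K).IsHermitian := isHermitian_conjTranspose_mul_self K
  set G := pinvH (Kᴴ * K) with hG
  set R := Kᴴ * K * G with hR
  have hRh : Rᴴ = R := by
    rw [hR, conjTranspose_mul, hH.eq, (isHermitian_pinvH hH).eq, mul_pinvH_comm hH]
  -- `R = 1 - Q`; the factor `1 - R / 2` splits the term `R S R` of `S - Q S Q = R S + S R - R S R`
  -- evenly between `Kᴴ X` and its adjoint.
  let X : Matrix n e ℂ := -(K * (G * (S * (1 - (2⁻¹ : ℂ) • R))))
  have hAX : A * X = 0 := by
    rw [Matrix.mul_neg, ← Matrix.mul_assoc, hAK, Matrix.zero_mul, neg_zero]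
  have hKX : Kᴴ * X = (2⁻¹ : ℂ) • (R * S * R) - R * S := by
    rw [Matrix.mul_neg, ← Matrix.mul_assoc, ← Matrix.mul_assoc, ← hR, Matrix.mul_sub,
      Matrix.mul_sub, Matrix.mul_one, Matrix.mul_smul, Matrix.mul_smul, neg_sub,
      ← Matrix.mul_assoc R S R]
  have hXK : Xᴴ * K = (2⁻¹ : ℂ) • (R * S * R) - S * R := by
    simpa [hRh, hS.eq, Matrix.mul_assoc] using congrArg conjTranspose hKX
  have hcompress : S + Kᴴ * X + Xᴴ * K = nullProj (Kᴴ * K) * S * nullProj (Kᴴ * K) := by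
    rw [hKX, hXK, nullProj, ← mul_pinvH_comm hH, ← hG, ← hR]
    simp only [Matrix.sub_mul, Matrix.mul_sub, Matrix.one_mul, Matrix.mul_one]
    module
  rw [← iPos_fromBlocks_shear hA hS K X, hAX, add_zero, hcompress]

theorem iPos_fromBlocks_of_mul_eq_zero {A : Matrix n n ℂ} (hA : A.IsHermitian)
    {S : Matrix e e ℂ} (hS : S.IsHermitian) {K : Matrix n e ℂ} (hAK : A * K = 0) (hKS : K * S = 0) :
    iPos (fromBlocks A K Kᴴ S) = iPos A + iPos S + K.rank := by
  have hSK : S * Kᴴ = 0 := by simpa [hS.eq] using congrArg conjTranspose hKS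
  have horth : fromBlocks A 0 0 S * fromBlocks 0 K Kᴴ 0 = 0 := by
    simp [fromBlocks_multiply, hAK, hSK]
  have hsplit : fromBlocks A K Kᴴ S = fromBlocks A 0 0 S + fromBlocks 0 K Kᴴ 0 := by
    simp [fromBlocks_add]
  rw [hsplit, iPos_add_of_mul_eq_zero (hA.fromBlocks conjTranspose_zero hS)
    (isHermitian_zero.fromBlocks rfl isHermitian_zero) horth, iPos_fromBlocks_zero hA hS,
    iPos_fromBlocks_offDiagonal]

variable {m : Type*} [Fintype m] [DecidableEq m]

theorem iPos_fromBlocks {A : Matrix n n ℂ} (hA : A.IsHermitian) {C : Matrix e e ℂ}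
    (hC : C.IsHermitian) (B : Matrix n e ℂ) {V : Matrix e m ℂ}
    (hV : LinearMap.range V.mulVecLin = LinearMap.ker (Bᴴ * nullProj A * B).mulVecLin) :
    iPos (fromBlocks A B Bᴴ C) =
      iPos A + iPos (Vᴴ * (C - Bᴴ * pinvH A * B) * V) + (Bᴴ * nullProj A * B).rank := by
  set S := C - Bᴴ * pinvH A * B
  set K := nullProj A * B with hK
  have hS : S.IsHermitian := isHermitian_schurComplement hA hC B
  have hH : (Kᴴ * K).IsHermitian := isHermitian_conjTranspose_mul_self K
  have hQ : (nullProj (Kᴴ * K))ᴴ = nullProj (Kᴴ * K) := isHermitian_nullProj hH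
  have hAK : A * K = 0 := by rw [hK, ← Matrix.mul_assoc, mul_nullProj hA, Matrix.zero_mul]
  have hKQ : K * nullProj (Kᴴ * K) = 0 :=
    (conjTranspose_mul_self_mul_eq_zero K _).1 (mul_nullProj hH)
  have hQSQ : (nullProj (Kᴴ * K) * S * nullProj (Kᴴ * K)).IsHermitian := by
    simpa only [hQ] using isHermitian_conjTranspose_mul_mul (nullProj (Kᴴ * K)) hS
  have hKQSQ : K * (nullProj (Kᴴ * K) * S * nullProj (Kᴴ * K)) = 0 := by
    simp only [← Matrix.mul_assoc, hKQ, Matrix.zero_mul]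
  rw [← conjTranspose_nullProj_mul_mul_nullProj_mul hA, ← hK] at hV ⊢
  rw [iPos_conjTranspose_mul_mul_eq_of_range_eq hS (hV.trans (range_nullProj hH).symm), hQ,
    rank_conjTranspose_mul_self, iPos_fromBlocks_eq_iPos_fromBlocks_schurComplement hA hC,
    iPos_fromBlocks_eq_iPos_fromBlocks_compression hA hS hAK,
    iPos_fromBlocks_of_mul_eq_zero hA hQSQ hAK hKQSQ]

theorem iNeg_fromBlocks {A : Matrix n n ℂ} (hA : A.IsHermitian) {C : Matrix e e ℂ}
    (hC : C.IsHermitian) (B : Matrix n e ℂ) {V : Matrix e m ℂ}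
    (hV : LinearMap.range V.mulVecLin = LinearMap.ker (Bᴴ * nullProj A * B).mulVecLin) :
    iNeg (fromBlocks A B Bᴴ C) =
      iNeg A + iNeg (Vᴴ * (C - Bᴴ * pinvH A * B) * V) + (Bᴴ * nullProj A * B).rank := by
  have hP : (-B)ᴴ * nullProj (-A) * -B = Bᴴ * nullProj A * B := by simp [nullProj_neg hA]
  have hS : Vᴴ * (-C - (-B)ᴴ * pinvH (-A) * -B) * V = -(Vᴴ * (C - Bᴴ * pinvH A * B) * V) := by
    simp only [pinvH_neg hA, conjTranspose_neg, Matrix.neg_mul, Matrix.mul_neg, neg_neg,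
      Matrix.mul_sub, Matrix.sub_mul]
    abel
  have hpos := iPos_fromBlocks hA.neg hC.neg (-B) (hP ▸ hV)
  rwa [hP, hS, conjTranspose_neg, ← fromBlocks_neg, iPos_neg, iPos_neg, iPos_neg] at hpos

theorem generalized_Haynsworth_general {A : Matrix n n ℂ} (hA : A.IsHermitian)
    {C : Matrix e e ℂ} (hC : C.IsHermitian) (B : Matrix n e ℂ) {V : Matrix e m ℂ}
    (hVinj : Function.Injective V.mulVec)
    (hVrange : LinearMap.range V.mulVecLin = LinearMap.ker (Bᴴ * nullProj A * B).mulVecLin) :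
    (Bᴴ * nullProj A * B).rank = Fintype.card e - Fintype.card m ∧
    (iPos (fromBlocks A B Bᴴ C) : ℤ) = iPos A + iPos (Vᴴ * (C - Bᴴ * pinvH A * B) * V) +
      (Bᴴ * nullProj A * B).rank ∧
    (iNeg (fromBlocks A B Bᴴ C) : ℤ) = iNeg A + iNeg (Vᴴ * (C - Bᴴ * pinvH A * B) * V) +
      (Bᴴ * nullProj A * B).rank ∧
    (iZero (fromBlocks A B Bᴴ C) : ℤ) = iZero A + iZero (Vᴴ * (C - Bᴴ * pinvH A * B) * V) -
      (Bᴴ * nullProj A * B).rank := by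
  have hM : (fromBlocks A B Bᴴ C).IsHermitian := hA.fromBlocks rfl hC
  have hSV := isHermitian_conjTranspose_mul_mul V (isHermitian_schurComplement hA hC B)
  have hpos := iPos_fromBlocks hA hC B hVrange
  have hneg := iNeg_fromBlocks hA hC B hVrange
  have hrank := rank_add_card_of_range_eq_ker hVinj hVrange
  have hzeroM := rank_add_iZero hM
  have hzeroA := rank_add_iZero hA
  have hzeroSV := rank_add_iZero hSV
  rw [← iPos_add_iNeg hM, Fintype.card_sum] at hzeroM
  rw [← iPos_add_iNeg hA] at hzeroA
  rw [← iPos_add_iNeg hSV] at hzeroSV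
  lia

end BlockInertia

/-- Theorem A.1 of the paper (generalized Haynsworth formula): for a Hermitian block
matrix `M = [[A, B], [B*, C]]`, with `P` the orthogonal projection onto `Null(A)`,
`𝒬 = Null(B*PB)` (realized via an orthonormal basis `V`), `i_∞ = rank(B*PB) = d − dim 𝒬`
and generalized Schur complement `M/A = C − B*A⁺B`, one has
`In(M) = In(A) + In_𝒬(M/A) + (i_∞, i_∞, −i_∞)`. -/
theorem generalized_Haynsworth
    (N d m : ℕ)
    (A : Matrix (Fin N) (Fin N) ℂ) (hA : A.IsHermitian)
    (C : Matrix (Fin d) (Fin d) ℂ) (hC : C.IsHermitian)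
    (B : Matrix (Fin N) (Fin d) ℂ)
    (M : Matrix (Fin N ⊕ Fin d) (Fin N ⊕ Fin d) ℂ)
    (hM : M = Matrix.fromBlocks A B Bᴴ C)
    (P : Matrix (Fin N) (Fin N) ℂ) (hP : P = nullProj A)
    (V : Matrix (Fin d) (Fin m) ℂ) (hV : Vᴴ * V = 1)
    (hVrange : LinearMap.range V.mulVecLin = LinearMap.ker (Bᴴ * P * B).mulVecLin)
    (SchurQ : Matrix (Fin m) (Fin m) ℂ)
    (hSchurQ : SchurQ = Vᴴ * (C - Bᴴ * pinvH A * B) * V)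
    (iinf : ℕ) (hiinf : iinf = (Bᴴ * P * B).rank) :
    iinf = d - m ∧
    (iPos M : ℤ) = iPos A + iPos SchurQ + iinf ∧
    (iNeg M : ℤ) = iNeg A + iNeg SchurQ + iinf ∧
    (iZero M : ℤ) = iZero A + iZero SchurQ - iinf := by
  subst hM hP hSchurQ hiinf
  simpa only [Fintype.card_fin] using generalized_Haynsworth_general hA hC B
    (Function.LeftInverse.injective (g := Vᴴ.mulVec) fun x => by simp [hV]) hVrange
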